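/- arXiv:2106.03163 — 2 statements merged into one kernel-verified Lean document; each statement's English description precedes it below -/
import Mathlib

section
/- (Comparison with Hoeffding's bound.) Let a < b be reals, D⁺ := (−∞, b], α ∈ (0, 0.5], and n ≥ 1. Let β ∈ ℝ be such that P( U_{(i)} ≥ i/n − β for all 1 ≤ i ≤ n ) = 1 − α, where U = (U_1,…,U_n) are i.i.d. Uniform(0,1) with order statistics U_{(1)} ≤ … ≤ U_{(n)}, and define ℓ ∈ [0,1]ⁿ by ℓ_i := max(0, i/n − β). Then for every x ∈ [a,b]ⁿ, using T(y) := m_{D⁺}(y,ℓ): b^α_{D⁺,T}(x) ≤ x̄ + (b − a)·√( ln(1/α) / (2n) ), where x̄ := (1/n)Σ_{i=1}^n x_i is the sample mean; moreover the inequality is strict when n ≥ 3. -/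
open MeasureTheory Set

/-- The sorted rearrangement (order statistics) of a finite real vector:
`sortedVec x i` is the (i+1)-st order statistic `x_{(i+1)}` (0-indexed). -/
noncomputable def sortedVec {n : ℕ} (x : Fin n → ℝ) : Fin n → ℝ :=
  x ∘ ⇑(Tuple.sort x)

/-- The induced mean `m(x, ℓ) = s - ∑ ℓ_{(i)} (x_{(i+1)} - x_{(i)})`, with `x_{(n+1)} := s`. -/
noncomputable def inducedMean {n : ℕ} (s : ℝ) (x ℓ : Fin n → ℝ) : ℝ :=
  s - ∑ i : Fin n, sortedVec ℓ i * ((Fin.snoc (sortedVec x) s : Fin (n+1) → ℝ) i.succ - sortedVec x i)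

/-- `S_{D,T}(x) = {y ∈ Dⁿ : T y ≤ T x}`. -/
def SsetD {n : ℕ} (D : Set ℝ) (T : (Fin n → ℝ) → ℝ) (x : Fin n → ℝ) : Set (Fin n → ℝ) :=
  {y | (∀ i, y i ∈ D) ∧ T y ≤ T x}

/-- `b_{D,T}(x, u) = sup_{z ∈ S_{D,T}(x)} m_{sup D}(z, u)`. -/
noncomputable def bfun {n : ℕ} (D : Set ℝ) (T : (Fin n → ℝ) → ℝ) (x u : Fin n → ℝ) : ℝ :=
  sSup ((fun z => inducedMean (sSup D) z u) '' SsetD D T x)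

/-- The uniform probability measure on `[0,1]`. -/
noncomputable def unif01 : Measure ℝ := volume.restrict (Icc (0:ℝ) 1)

/-- The law of an i.i.d. sample of size `n` from Uniform(0,1). -/
noncomputable def unifPi (n : ℕ) : Measure (Fin n → ℝ) := Measure.pi fun _ => unif01

/-- The `p`-quantile of the random variable `Y` under `μ`:
`Q(p, Y) = inf {y : P(Y ≤ y) ≥ p}`. -/
noncomputable def rquantile {Ω : Type*} [MeasurableSpace Ω] (μ : Measure Ω)
    (Y : Ω → ℝ) (p : ℝ) : ℝ :=
  sInf {y : ℝ | ENNReal.ofReal p ≤ μ {ω | Y ω ≤ y}}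

/-- The upper confidence bound `b^α_{D,T}(x) = Q(1 - α, b_{D,T}(x, U))`, `U` i.i.d. Uniform(0,1). -/
noncomputable def ucb {n : ℕ} (D : Set ℝ) (T : (Fin n → ℝ) → ℝ) (α : ℝ)
    (x : Fin n → ℝ) : ℝ :=
  rquantile (unifPi n) (bfun D T x) (1 - α)

/-- The stairstep function `G_{x,ℓ}` with top value at `s`. -/
noncomputable def stairstep {n : ℕ} (s : ℝ) (x ℓ : Fin n → ℝ) (t : ℝ) : ℝ :=
  if s ≤ t then 1 else sSup ({0} ∪ (sortedVec ℓ '' {i | sortedVec x i ≤ t}))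

/-- The `k`-th smallest value (1-indexed) among `m 0, …, m (L-1)`. -/
noncomputable def kthSmallest {L : ℕ} (m : Fin L → ℝ) (k : ℕ) : ℝ :=
  sInf {y : ℝ | k ≤ Nat.card {j : Fin L // m j ≤ y}}


/-- strict monotone step from derivative -/
lemma hz_step {f f' : ℝ → ℝ} {p q : ℝ} (hpq : p < q)
    (hd : ∀ x ∈ Icc p q, HasDerivAt f (f' x) x) (hpos : ∀ x ∈ Ioo p q, 0 < f' x) : f p < f q := by
  have := strictMonoOn_of_hasDerivWithinAt_pos (convex_Icc p q) (f := f) (f' := f')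
    (fun x hx => (hd x hx).continuousAt.continuousWithinAt)
    (fun x hx => (hd x (interior_subset hx)).hasDerivWithinAt)
    (fun x hx => hpos x (by simpa using hx))
  exact this ⟨le_rfl, hpq.le⟩ ⟨hpq.le, le_rfl⟩ hpq

lemma hz_step' {f f' : ℝ → ℝ} {p q : ℝ} (hpq : p ≤ q)
    (hd : ∀ x ∈ Icc p q, HasDerivAt f (f' x) x) (hpos : ∀ x ∈ Ioo p q, 0 ≤ f' x) : f p ≤ f q := by
  have := monotoneOn_of_hasDerivWithinAt_nonneg (convex_Icc p q) (f := f) (f' := f')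
    (fun x hx => (hd x hx).continuousAt.continuousWithinAt)
    (fun x hx => (hd x (interior_subset hx)).hasDerivWithinAt)
    (fun x hx => hpos x (by simpa using hx))
  exact this ⟨le_rfl, hpq⟩ ⟨hpq, le_rfl⟩ hpq

/-- strict Pinsker -/
lemma hz_pinsker {p q : ℝ} (hp : 0 < p) (hpq : p < q) (hq : q < 1) :
    2 * (q - p) ^ 2 < p * Real.log (p / q) + (1 - p) * Real.log ((1 - p) / (1 - q)) := by
  set f : ℝ → ℝ := fun x => - p * Real.log x - (1 - p) * Real.log (1 - x) - 2 * (x - p) ^ 2 with hf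
  set f' : ℝ → ℝ := fun x => (x - p) * (1 - 2 * x) ^ 2 / (x * (1 - x)) with hf'
  have hd : ∀ x ∈ Icc p q, HasDerivAt f (f' x) x := by
    intro x hx
    have h0 : x ≠ 0 := by have := hx.1; linarith
    have h1 : 1 - x ≠ 0 := by have := hx.2; linarith
    have h2 : HasDerivAt (fun x : ℝ => 1 - x) (-1) x := by
      simpa using (hasDerivAt_id x).const_sub 1
    have h3 : HasDerivAt (fun x : ℝ => x - p) 1 x := (hasDerivAt_id x).sub_const p
    have := (((Real.hasDerivAt_log h0).const_mul (-p)).sub ((h2.log h1).const_mul (1 - p))).sub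
      ((h3.pow 2).const_mul 2)
    refine this.congr_deriv ?_
    simp only [hf']
    field_simp
    ring
  have hpos : ∀ x ∈ Ioo p q, x ≠ 1 / 2 → 0 < f' x := by
    intro x hx h
    have h0 : 0 < x := by have := hx.1; linarith
    have h1 : 0 < 1 - x := by have := hx.2; linarith
    have h2 : 0 < x - p := by have := hx.1; linarith
    have h3 : 1 - 2 * x ≠ 0 := by intro h'; apply h; linarith
    simp only [hf']; positivity
  have key : f p < f q := by
    by_cases h : 1 / 2 ∈ Ioo p q
    · have a1 : f p < f (1/2) := hz_step h.1 (fun x hx => hd x ⟨hx.1, hx.2.trans h.2.le⟩)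
        (fun x hx => hpos x ⟨hx.1, hx.2.trans h.2⟩ hx.2.ne)
      have a2 : f (1/2) < f q := hz_step h.2 (fun x hx => hd x ⟨h.1.le.trans hx.1, hx.2⟩)
        (fun x hx => hpos x ⟨h.1.trans hx.1, hx.2⟩ hx.1.ne')
      exact a1.trans a2
    · exact hz_step hpq hd (fun x hx => hpos x hx (by rintro rfl; exact h hx))
  rw [Real.log_div (by linarith) (by linarith), Real.log_div (by linarith) (by linarith)]
  simp only [hf] at key
  nlinarith

/-- twice artanh bounds -/
lemma hz_artanh {x : ℝ} (h0 : 0 < x) (h1 : x < 1) : 2 * x < Real.log ((1 + x) / (1 - x)) := by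
  set f : ℝ → ℝ := fun x => Real.log (1 + x) - Real.log (1 - x) - 2 * x with hf
  set f' : ℝ → ℝ := fun x => 2 * x ^ 2 / ((1 + x) * (1 - x)) with hf'
  have : f 0 < f x := by
    refine hz_step h0 (f' := f') ?_ ?_
    · intro y hy
      have a0 : 1 + y ≠ 0 := by have := hy.1; linarith
      have a1 : 1 - y ≠ 0 := by have := hy.2; linarith
      have h2 : HasDerivAt (fun x : ℝ => 1 - x) (-1) y := by
        simpa using (hasDerivAt_id y).const_sub 1
      have h3 : HasDerivAt (fun x : ℝ => 1 + x) 1 y := (hasDerivAt_id y).const_add 1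
      have := ((h3.log a0).sub (h2.log a1)).sub ((hasDerivAt_id y).const_mul 2)
      refine this.congr_deriv ?_
      simp only [hf']
      field_simp
      ring
    · intro y hy
      have a2 : 0 < y := hy.1
      have a0 : 0 < 1 + y := by linarith
      have a1 : 0 < 1 - y := by have := hy.2; linarith
      simp only [hf']; positivity
  simp only [hf] at this
  rw [Real.log_div (by linarith) (by linarith)]
  simp at this
  linarith

lemma hz_artanh2 {x : ℝ} (h0 : 0 < x) (h1 : x < 1) :
    Real.log ((1 + x) / (1 - x)) < 2 * x / (1 - x ^ 2) := by
  set f : ℝ → ℝ := fun x => 2 * x / (1 - x ^ 2) - (Real.log (1 + x) - Real.log (1 - x)) with hf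
  set f' : ℝ → ℝ := fun x => 4 * x ^ 2 / (1 - x ^ 2) ^ 2 with hf'
  have : f 0 < f x := by
    refine hz_step h0 (f' := f') ?_ ?_
    · intro y hy
      have a0 : 1 + y ≠ 0 := by have := hy.1; linarith
      have a1 : 1 - y ≠ 0 := by have := hy.2; linarith
      have a3 : 1 - y ^ 2 ≠ 0 := by
        have : 1 - y ^ 2 = (1 + y) * (1 - y) := by ring
        rw [this]; exact mul_ne_zero a0 a1
      have h2 : HasDerivAt (fun x : ℝ => 1 - x) (-1) y := by
        simpa using (hasDerivAt_id y).const_sub 1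
      have h3 : HasDerivAt (fun x : ℝ => 1 + x) 1 y := (hasDerivAt_id y).const_add 1
      have h4 := ((hasDerivAt_id y).pow 2).const_sub 1
      have := (((hasDerivAt_id y).const_mul 2).div h4 a3).sub ((h3.log a0).sub (h2.log a1))
      refine this.congr_deriv ?_
      simp only [hf', id, Pi.pow_apply]
      have e : 1 / (1 + y) - -1 / (1 - y) = 2 / (1 - y ^ 2) := by
        have : 1 - y ^ 2 = (1 + y) * (1 - y) := by ring
        rw [this]; field_simp; ring
      rw [e]
      field_simp
      ring
    · intro y hy
      have a2 : 0 < y := hy.1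
      have a1 : 0 < 1 - y ^ 2 := by have := hy.2; nlinarith
      simp only [hf']; positivity
  simp only [hf] at this
  rw [Real.log_div (by linarith) (by linarith)]
  simp at this
  linarith

/-- the stationary point -/
lemma hz_root {ε : ℝ} (h0 : 0 < ε) (h1 : ε < 1) :
    ∃ t, 1 / 2 ≤ t ∧ ε < t ∧ t ≤ (1 + ε) / 2 ∧
      Real.log ((t - ε) / t) - Real.log ((1 - t + ε) / (1 - t)) + ε / (t * (1 - t)) = 0 := by
  set g : ℝ → ℝ := fun t =>
    Real.log ((t - ε) / t) - Real.log ((1 - t + ε) / (1 - t)) + ε / (t * (1 - t)) with hg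
  have hr : 0 ≤ g ((1 + ε) / 2) := by
    have := hz_artanh2 h0 h1
    simp only [hg]
    have e1 : ((1 + ε) / 2 - ε) / ((1 + ε) / 2) = ((1 + ε) / (1 - ε))⁻¹ := by
      have : 1 - ε ≠ 0 := by linarith
      field_simp; ring
    have e2 : (1 - (1 + ε) / 2 + ε) / (1 - (1 + ε) / 2) = (1 + ε) / (1 - ε) := by
      have a : 1 - ε ≠ 0 := by linarith
      have : 1 - (1 + ε) / 2 = (1 - ε) / 2 := by ring
      rw [this]; field_simp; ring
    have e3 : ε / ((1 + ε) / 2 * (1 - (1 + ε) / 2)) = 2 * (2 * ε / (1 - ε ^ 2)) := by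
      have : (1 + ε) / 2 * (1 - (1 + ε) / 2) = (1 - ε ^ 2) / 4 := by ring
      have a : 1 - ε ^ 2 ≠ 0 := by nlinarith
      rw [this]; field_simp; ring
    rw [e1, e2, e3, Real.log_inv]
    linarith
  have hl : ∃ l, 1 / 2 ≤ l ∧ ε < l ∧ l ≤ (1 + ε) / 2 ∧ g l ≤ 0 := by
    by_cases h : ε < 1 / 2
    · refine ⟨1 / 2, le_rfl, h, by linarith, ?_⟩
      have := hz_artanh (x := 2 * ε) (by linarith) (by linarith)
      simp only [hg]
      have e1 : (1 / 2 - ε) / (1 / 2) = ((1 - 2 * ε)) := by ring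
      have e2 : (1 - 1 / 2 + ε) / (1 - 1 / 2) = (1 + 2 * ε) := by ring
      rw [e1, e2]
      rw [Real.log_div (by linarith) (by linarith)] at this
      have : ε / (1 / 2 * (1 - 1 / 2)) = 4 * ε := by ring
      linarith
    · push Not at h
      set y := 2 / (1 - ε) with hy
      have a : 0 < 1 - ε := by linarith
      have hy0 : 0 < y := by positivity
      set δ := Real.exp (-y) / 2 with hδ
      have hδ0 : 0 < δ := by positivity
      have hδ1 : δ ≤ (1 - ε) / 2 := by
        have : Real.exp (-y) ≤ 1 / y := by
          rw [Real.exp_neg, ← one_div]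
          exact one_div_le_one_div_of_le hy0 (by linarith [Real.add_one_le_exp y])
        have e : 1 / y = (1 - ε) / 2 := by rw [hy]; field_simp
        rw [e] at this
        linarith
      refine ⟨ε + δ, by linarith, by linarith, by linarith, ?_⟩
      simp only [hg]
      have b1 : Real.log ((ε + δ - ε) / (ε + δ)) ≤ - y := by
        have : (ε + δ - ε) / (ε + δ) ≤ Real.exp (-y) := by
          rw [div_le_iff₀ (by linarith)]
          nlinarith [Real.exp_pos (-y)]
        calc _ ≤ Real.log (Real.exp (-y)) := Real.log_le_log (by apply div_pos <;> linarith) this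
          _ = _ := Real.log_exp _
      have b2 : 0 ≤ Real.log ((1 - (ε + δ) + ε) / (1 - (ε + δ))) := by
        apply Real.log_nonneg
        rw [le_div_iff₀ (by linarith)]
        linarith
      have b3 : ε / ((ε + δ) * (1 - (ε + δ))) ≤ y := by
        rw [div_le_iff₀ (mul_pos (by linarith) (by linarith))]
        have : 1 ≤ y * (1 - (ε + δ)) := by
          rw [hy, div_mul_eq_mul_div, le_div_iff₀ a]; linarith
        calc ε ≤ (ε + δ) * 1 := by linarith
          _ ≤ (ε + δ) * (y * (1 - (ε + δ))) := by gcongr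
          _ = _ := by ring
      linarith
  obtain ⟨l, hl1, hl2, hl3, hl4⟩ := hl
  have hc : ContinuousOn g (Icc l ((1 + ε) / 2)) := by
    intro t ht
    have a1 : t ≠ 0 := by have := ht.1; linarith
    have a2 : 1 - t ≠ 0 := by have := ht.2; linarith
    have a3 : t - ε ≠ 0 := by have := ht.1; linarith
    have a4 : 1 - t + ε ≠ 0 := by have := ht.2; linarith
    apply ContinuousAt.continuousWithinAt
    have := div_ne_zero a3 a1
    have := div_ne_zero a4 a2
    have := mul_ne_zero a1 a2
    simp only [hg]
    fun_prop (disch := assumption)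
  obtain ⟨t, ht, ht0⟩ := intermediate_value_Icc hl3 hc ⟨hl4, hr⟩
  exact ⟨t, by linarith [ht.1], by linarith [ht.1], ht.2, ht0⟩

set_option maxHeartbeats 2000000 in
/-- The key deterministic inequality. -/
lemma hz_key {ε : ℝ} (h0 : 0 < ε) (h1 : ε < 1) :
    ∃ θ, 0 < θ ∧ θ < 1 ∧ ∀ t, ε ≤ t → t < 1 →
      2 * ε ^ 2 < (t - ε) * Real.log θ + (1 - t + ε) * Real.log ((1 - θ * t) / (1 - t)) := by
  obtain ⟨t₀, hh, ht1, ht2, hroot⟩ := hz_root h0 h1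
  have ht0 : 0 < t₀ := by linarith
  have ht3 : t₀ < 1 := by linarith
  set θ := (t₀ - ε) / t₀ with hθ
  have hθ0 : 0 < θ := div_pos (by linarith) ht0
  have hθ1 : θ < 1 := by rw [hθ, div_lt_one ht0]; linarith
  have hθt : θ * t₀ = t₀ - ε := by rw [hθ]; field_simp
  refine ⟨θ, hθ0, hθ1, ?_⟩
  set φ : ℝ → ℝ := fun t => (t - ε) * Real.log θ +
    (1 - t + ε) * (Real.log (1 - θ * t) - Real.log (1 - t)) with hφ
  set φ' : ℝ → ℝ := fun t => Real.log θ - (Real.log (1 - θ * t) - Real.log (1 - t)) +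
    (1 - t + ε) * (1 - θ) / ((1 - θ * t) * (1 - t)) with hφ'
  set L : ℝ → ℝ := fun t => (1 - t) * (2 * θ * ε - (1 - θ)) + ε * (1 - θ) with hL
  set φ'' : ℝ → ℝ := fun t => (1 - θ) * L t / ((1 - θ * t) ^ 2 * (1 - t) ^ 2) with hφ''
  have hpos : ∀ t, 0 < t → t < 1 → 0 < 1 - θ * t ∧ 0 < 1 - t := fun t a b =>
    ⟨by nlinarith, by linarith⟩
  have hd1 : ∀ t, 0 < t → t < 1 → HasDerivAt φ (φ' t) t := by
    intro t a b
    obtain ⟨p1, p2⟩ := hpos t a b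
    have d1 : HasDerivAt (fun x : ℝ => 1 - x) (-1) t := by
      simpa using (hasDerivAt_id t).const_sub 1
    have d2 : HasDerivAt (fun x : ℝ => 1 - θ * x) (-θ) t := by
      simpa using ((hasDerivAt_id t).const_mul θ).const_sub 1
    have d3 : HasDerivAt (fun x : ℝ => x - ε) 1 t := (hasDerivAt_id t).sub_const ε
    have := (d3.mul_const (Real.log θ)).add ((d1.add_const ε).mul ((d2.log p1.ne').sub (d1.log p2.ne')))
    refine this.congr_deriv ?_
    simp only [hφ', Pi.sub_apply]
    field_simp
    ring
  have hd2 : ∀ t, 0 < t → t < 1 → HasDerivAt φ' (φ'' t) t := by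
    intro t a b
    obtain ⟨p1, p2⟩ := hpos t a b
    have d1 : HasDerivAt (fun x : ℝ => 1 - x) (-1) t := by
      simpa using (hasDerivAt_id t).const_sub 1
    have d2 : HasDerivAt (fun x : ℝ => 1 - θ * x) (-θ) t := by
      simpa using ((hasDerivAt_id t).const_mul θ).const_sub 1
    have := (((d2.log p1.ne').sub (d1.log p2.ne')).const_sub (Real.log θ)).add
      (((d1.add_const ε).mul_const (1 - θ)).div (d2.mul d1) (mul_pos p1 p2).ne')
    refine this.congr_deriv ?_
    simp only [hφ'', hL, Pi.mul_apply]
    field_simp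
    ring
  have hφ'0 : φ' t₀ = 0 := by
    simp only [hφ']
    rw [hθt]
    have e : (1 - t₀ + ε) * (1 - θ) / ((1 - (t₀ - ε)) * (1 - t₀)) = ε / (t₀ * (1 - t₀)) := by
      have a1 : (1 - t₀) ≠ 0 := by linarith
      have a2 : 1 - (t₀ - ε) ≠ 0 := by linarith
      have : 1 - θ = ε / t₀ := by rw [hθ]; field_simp; ring
      rw [this, show 1 - t₀ + ε = 1 - (t₀ - ε) by ring]
      field_simp
    rw [e]
    rw [Real.log_div (x := 1 - t₀ + ε) (by linarith) (by linarith),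
      show 1 - t₀ + ε = 1 - (t₀ - ε) by ring] at hroot
    linarith
  have hφ0 : 2 * ε ^ 2 < φ t₀ := by
    have := hz_pinsker (p := t₀ - ε) (q := t₀) (by linarith) (by linarith) ht3
    rw [show t₀ - (t₀ - ε) = ε by ring, Real.log_div (x := 1 - (t₀ - ε)) (by linarith) (by linarith)] at this
    simp only [hφ]
    rw [hθt, show 1 - t₀ + ε = 1 - (t₀ - ε) by ring]
    exact this
  have hφε : 2 * ε ^ 2 < φ ε := by
    have := hz_artanh (x := ε ^ 2) (by positivity) (by nlinarith)
    obtain ⟨p1, p2⟩ := hpos ε h0 h1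
    have e : φ ε = Real.log ((1 - θ * ε) / (1 - ε)) := by
      rw [Real.log_div p1.ne' p2.ne']; simp only [hφ]; ring
    rw [e]
    refine this.trans_le (Real.log_le_log (div_pos (by positivity) (by nlinarith)) ?_)
    rw [div_le_div_iff₀ (by nlinarith) p2]
    have : (1 - θ) * (1 + ε) ≥ 2 * ε := by
      have : 1 - θ = ε / t₀ := by rw [hθ]; field_simp; ring
      rw [this, div_mul_eq_mul_div, ge_iff_le, le_div_iff₀ ht0]
      nlinarith
    nlinarith [mul_pos h0 p2]
  have hL0 : 0 ≤ L t₀ := by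
    have e : L t₀ = ε / t₀ * ((2 * t₀ - 1) * (1 + ε - t₀)) := by
      simp only [hL, hθ]; field_simp; ring
    rw [e]
    apply mul_nonneg (by positivity)
    apply mul_nonneg <;> linarith
  have hL1 : 0 < L 1 := by simp only [hL]; nlinarith
  -- sign of second derivative
  have hs1 : ∀ t, 0 < t → t < 1 → 0 ≤ L t → 0 ≤ φ'' t := by
    intro t a b c
    obtain ⟨p1, p2⟩ := hpos t a b
    have : 0 < 1 - θ := by linarith
    simp only [hφ'']; positivity
  have hs2 : ∀ t, 0 < t → t < 1 → L t ≤ 0 → φ'' t ≤ 0 := by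
    intro t a b c
    obtain ⟨p1, p2⟩ := hpos t a b
    have : 0 < 1 - θ := by linarith
    simp only [hφ'']
    apply div_nonpos_of_nonpos_of_nonneg _ (by positivity)
    nlinarith
  have hLmid : ∀ r t u, r ≤ t → t ≤ u → 0 ≤ L r → 0 ≤ L u → 0 ≤ L t := by
    intro r t u a b c d
    simp only [hL] at *
    by_cases hk : 0 ≤ 2 * θ * ε - (1 - θ)
    · nlinarith
    · nlinarith
  -- convex zone
  have hconv : ∀ t, 0 < t → t < 1 → 0 ≤ L t → φ t₀ ≤ φ t := by
    intro t a b c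
    rcases le_total t t₀ with h | h
    · have hm : ∀ x ∈ Icc t t₀, φ' x ≤ 0 := by
        intro x hx
        rw [← hφ'0]
        exact hz_step' hx.2 (fun y hy => hd2 y (by linarith [hx.1, hy.1]) (by linarith [hy.2]))
          (fun y hy => hs1 y (by linarith [hx.1, hy.1]) (by linarith [hy.2])
            (hLmid t y t₀ (by linarith [hx.1, hy.1]) hy.2.le c hL0))
      have := hz_step' (f := fun x => - φ x) (f' := fun x => - φ' x) h
        (fun x hx => (hd1 x (by linarith [hx.1]) (by linarith [hx.2])).neg)
        (fun x hx => by simpa using hm x ⟨hx.1.le, hx.2.le⟩)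
      simpa using this
    · have hm : ∀ x ∈ Icc t₀ t, 0 ≤ φ' x := by
        intro x hx
        rw [← hφ'0]
        exact hz_step' hx.1 (fun y hy => hd2 y (by linarith [hx.1, hy.1]) (by linarith [hx.2, hy.2]))
          (fun y hy => hs1 y (by linarith [hx.1, hy.1]) (by linarith [hx.2, hy.2])
            (hLmid t₀ y t hy.1.le (by linarith [hx.2, hy.2]) hL0 c))
      exact hz_step' h
        (fun x hx => (hd1 x (by linarith [hx.1]) (by linarith [hx.2])))
        (fun x hx => hm x ⟨hx.1.le, hx.2.le⟩)
  intro t hεt ht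
  have hp := hpos t (by linarith) ht
  rw [Real.log_div hp.1.ne' hp.2.ne']
  change 2 * ε ^ 2 < φ t
  by_cases hLt : 0 ≤ L t
  · exact hφ0.trans_le (hconv t (by linarith) ht hLt)
  · push Not at hLt
    have htt : t < t₀ := by
      by_contra hc
      push Not at hc
      exact absurd (hLmid t₀ t 1 hc ht.le hL0 hL1.le) (not_le.2 hLt)
    have hLc : ContinuousOn L (Icc t t₀) := by
      simp only [hL]; fun_prop
    obtain ⟨r, hr, hr0⟩ := intermediate_value_Icc htt.le hLc ⟨hLt.le, hL0⟩
    have hr1 : r < 1 := by linarith [hr.2]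
    have hφr := hφ0.trans_le (hconv r (by linarith [hr.1]) hr1 hr0.ge)
    have hconc : ConcaveOn ℝ (Icc ε r) φ := by
      refine concaveOn_of_hasDerivWithinAt2_nonpos (f' := φ') (f'' := φ'') (convex_Icc _ _)
        (fun x hx => (hd1 x (by linarith [hx.1]) (by linarith [hx.2])).continuousAt.continuousWithinAt)
        (fun x hx => ?_) (fun x hx => ?_) (fun x hx => ?_)
      all_goals rw [interior_Icc] at hx
      · exact (hd1 x (by linarith [hx.1]) (by linarith [hx.2])).hasDerivWithinAt
      · exact (hd2 x (by linarith [hx.1]) (by linarith [hx.2])).hasDerivWithinAt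
      · apply hs2 x (by linarith [hx.1]) (by linarith [hx.2])
        by_contra hc
        push Not at hc
        -- x < r, L x > 0 = L r, but L 1 > 0
        have e1 : L x = L r + (r - x) * (2 * θ * ε - (1 - θ)) := by simp only [hL]; ring
        have e2 : L 1 = L r - (1 - r) * (2 * θ * ε - (1 - θ)) := by simp only [hL]; ring
        rw [hr0] at e1 e2
        rw [e1] at hc
        rw [e2] at hL1
        have k1 : 0 < 2 * θ * ε - (1 - θ) := by
          by_contra hk
          push Not at hk
          nlinarith only [hc, hk, hx.2]
        nlinarith only [hL1, k1, hr1]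
    have := hconc.min_le_of_mem_Icc (left_mem_Icc.2 (hεt.trans hr.1))
      (right_mem_Icc.2 (hεt.trans hr.1)) ⟨hεt, hr.1⟩
    exact (lt_min hφε hφr).trans_le this

instance unif01_prob : IsProbabilityMeasure unif01 := ⟨by simp [unif01]⟩

instance unifPi_prob (n : ℕ) : IsProbabilityMeasure (unifPi n) := by
  unfold unifPi; infer_instance

open Classical in
/-- number of coordinates lying in a set -/
noncomputable def hzcnt {n : ℕ} (x : Fin n → ℝ) (S : Set ℝ) : ℕ :=
  (Finset.univ.filter fun j => x j ∈ S).card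

lemma hzcnt_meas {n : ℕ} {S : Set ℝ} (hS : MeasurableSet S) :
    Measurable fun x : Fin n → ℝ => hzcnt x S := by
  classical
  unfold hzcnt
  simp_rw [Finset.card_filter]
  refine Finset.measurable_sum _ fun j _ => ?_
  exact Measurable.ite (measurable_pi_apply j hS) measurable_const measurable_const

lemma hz_pi_smul {n : ℕ} (m : Fin n → Measure ℝ) [∀ i, IsFiniteMeasure (m i)] (c : Fin n → ENNReal)
    (hc : ∀ i, c i ≠ ⊤) :
    Measure.pi (fun i => c i • m i) = (∏ i, c i) • Measure.pi m := by
  have : ∀ i, IsFiniteMeasure (c i • m i) := fun i => Measure.smul_finite _ (hc i)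
  refine Measure.pi_eq fun s hs => ?_
  simp [Measure.pi_pi, Finset.prod_mul_distrib]

lemma hz_scale {n : ℕ} (m m' : Measure ℝ) [IsFiniteMeasure m] [IsFiniteMeasure m'] (S : Set ℝ)
    (hS : MeasurableSet S) (c d : ENNReal) (hc : c ≠ ⊤) (hd : d ≠ ⊤)
    (h1 : m'.restrict S = c • m.restrict S)
    (h2 : m'.restrict Sᶜ = d • m.restrict Sᶜ) (i : ℕ) (A : Set (Fin n → ℝ)) (hA : MeasurableSet A)
    (hAi : ∀ x ∈ A, hzcnt x S = i) :
    Measure.pi (fun _ => m') A = c ^ i * d ^ (n - i) * Measure.pi (fun _ => m) A := by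
  classical
  let R : Finset (Fin n) → Fin n → Set ℝ := fun J j => if j ∈ J then S else Sᶜ
  let B : Finset (Fin n) → Set (Fin n → ℝ) := fun J => Set.univ.pi (R J)
  have hR : ∀ J j, MeasurableSet (R J j) := by
    intro J j; simp only [R]; split_ifs
    exacts [hS, hS.compl]
  have hB : ∀ J, MeasurableSet (B J) := fun J => MeasurableSet.univ_pi (hR J)
  have hBiff : ∀ J x, x ∈ B J ↔ (Finset.univ.filter fun j => x j ∈ S) = J := by
    intro J x
    simp only [B, R, Set.mem_univ_pi, Finset.ext_iff, Finset.mem_filter, Finset.mem_univ, true_and]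
    refine forall_congr' fun j => ?_
    by_cases h : j ∈ J <;> simp [h]
  have hdis : Pairwise (Function.onFun Disjoint fun J => A ∩ B J) := by
    intro J K hJK
    refine Set.disjoint_left.2 fun x hx hx' => hJK ?_
    rw [← (hBiff J x).1 hx.2, (hBiff K x).1 hx'.2]
  have hdec : A = ⋃ J, A ∩ B J := by
    ext x
    simp only [mem_iUnion, mem_inter_iff, hBiff]
    simp
  have hm : ∀ μ : Measure (Fin n → ℝ), μ A = ∑ J, μ (A ∩ B J) := by
    intro μ
    conv_lhs => rw [hdec]
    rw [measure_iUnion hdis fun J => hA.inter (hB J), tsum_fintype]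
  rw [hm, hm (Measure.pi fun _ => m), Finset.mul_sum]
  refine Finset.sum_congr rfl fun J _ => ?_
  rcases (A ∩ B J).eq_empty_or_nonempty with he | ⟨x, hx⟩
  · simp [he]
  have hcard : J.card = i := by
    rw [← hAi x hx.1, ← (hBiff J x).1 hx.2]; unfold hzcnt; congr
  have e1 : ∀ j, m'.restrict (R J j) = (if j ∈ J then c else d) • m.restrict (R J j) := by
    intro j; simp only [R]; split_ifs
    exacts [h1, h2]
  rw [← Measure.restrict_apply hA, ← Measure.restrict_apply hA]
  simp only [B]
  rw [Measure.restrict_pi_pi, Measure.restrict_pi_pi]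
  rw [show (fun j => m'.restrict (R J j)) =
    fun j => (if j ∈ J then c else d) • m.restrict (R J j) from funext e1]
  rw [hz_pi_smul _ _ (fun j => by split_ifs <;> assumption)]
  rw [Measure.smul_apply, smul_eq_mul, Finset.prod_ite, Finset.prod_const, Finset.prod_const]
  congr 3
  · rw [← hcard]; congr 1; ext j; simp
  · rw [← hcard]
    have := Finset.card_compl J
    rw [Fintype.card_fin] at this
    rw [← this]; congr 1; ext j; simp

/-- tilted law -/
noncomputable def hznu (θ : ℝ) : Measure ℝ :=
  ENNReal.ofReal θ • unif01 + ENNReal.ofReal (1 - θ) • Measure.dirac 0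

lemma hznu_prob {θ : ℝ} (h0 : 0 < θ) (h1 : θ < 1) : IsProbabilityMeasure (hznu θ) := by
  refine ⟨?_⟩
  simp only [hznu, Measure.add_apply, Measure.smul_apply, measure_univ, smul_eq_mul, mul_one]
  rw [← ENNReal.ofReal_add h0.le (by linarith)]
  simp

lemma unif01_Iio {s : ℝ} (h0 : 0 ≤ s) (h1 : s ≤ 1) : unif01 (Iio s) = ENNReal.ofReal s := by
  unfold unif01
  rw [Measure.restrict_apply measurableSet_Iio]
  have : Iio s ∩ Icc 0 1 = Ico 0 s := by
    ext x; simp only [mem_inter_iff, mem_Iio, mem_Icc, mem_Ico]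
    constructor
    · rintro ⟨a, b, c⟩; exact ⟨b, a⟩
    · rintro ⟨a, b⟩; exact ⟨b, a, by linarith⟩
  rw [this]; simp

lemma hz_tilt {n : ℕ} {θ s : ℝ} (h0 : 0 < θ) (h1 : θ < 1) (hs0 : 0 < s) (hs1 : s ≤ 1)
    (i : ℕ) (A : Set (Fin n → ℝ)) (hA : MeasurableSet A)
    (hAi : ∀ x ∈ A, hzcnt x (Iio s) = i)
    (hinv : ∀ x : Fin n → ℝ, x ∈ A ↔ (fun j => if x j < s then 0 else x j) ∈ A) :
    Measure.pi (fun _ => hznu θ) A =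
      ENNReal.ofReal ((1 - θ * (1 - s)) / s) ^ i * ENNReal.ofReal θ ^ (n - i) * unifPi n A := by
  have := hznu_prob h0 h1
  set c : ℝ → ℝ := fun y => if y < s then 0 else y with hc
  have hcm : Measurable c := Measurable.ite measurableSet_Iio measurable_const measurable_id
  set C : (Fin n → ℝ) → (Fin n → ℝ) := fun x j => c (x j) with hC
  have hCm : Measurable C := measurable_pi_lambda _ fun j => hcm.comp (measurable_pi_apply j)
  have hpre : C ⁻¹' A = A := by ext x; exact (hinv x).symm
  have hp : ∀ μ : Measure ℝ, IsProbabilityMeasure μ →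
      Measure.pi (fun _ : Fin n => μ) A = Measure.pi (fun _ : Fin n => μ.map c) A := by
    intro μ hμ
    have : IsProbabilityMeasure (μ.map c) := Measure.isProbabilityMeasure_map hcm.aemeasurable
    rw [← Measure.pi_map_pi (μ := fun _ : Fin n => μ) (f := fun _ => c) fun _ => hcm.aemeasurable]
    rw [Measure.map_apply hCm hA]
    exact congrArg _ hpre.symm
  have p1 : IsProbabilityMeasure (unif01.map c) := Measure.isProbabilityMeasure_map hcm.aemeasurable
  have p2 : IsProbabilityMeasure ((hznu θ).map c) := Measure.isProbabilityMeasure_map hcm.aemeasurable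
  unfold unifPi
  rw [hp _ inferInstance, hp unif01 inferInstance]
  refine hz_scale _ _ (Iio s) measurableSet_Iio _ _ ENNReal.ofReal_ne_top ENNReal.ofReal_ne_top
    ?_ ?_ i A hA hAi
  · ext B hB
    rw [Measure.smul_apply, Measure.restrict_apply hB, Measure.restrict_apply hB,
      Measure.map_apply hcm (hB.inter measurableSet_Iio),
      Measure.map_apply hcm (hB.inter measurableSet_Iio)]
    by_cases h : (0:ℝ) ∈ B
    · have e : c ⁻¹' (B ∩ Iio s) = Iio s := by
        ext y
        simp only [hc, mem_preimage, mem_inter_iff, mem_Iio]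
        by_cases hy : y < s <;> simp [hy, h, hs0]
      rw [e, unif01_Iio hs0.le hs1, hznu]
      simp only [Measure.add_apply, Measure.smul_apply, smul_eq_mul, unif01_Iio hs0.le hs1]
      rw [Measure.dirac_apply' _ measurableSet_Iio]
      simp only [mem_Iio, hs0, indicator_of_mem, Pi.one_apply, mul_one]
      rw [← ENNReal.ofReal_mul h0.le, ← ENNReal.ofReal_add (by positivity) (by linarith),
        ← ENNReal.ofReal_mul (div_nonneg (by nlinarith) hs0.le)]
      congr 1
      field_simp
      ring
    · have e : c ⁻¹' (B ∩ Iio s) = ∅ := by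
        ext y
        simp only [hc, mem_preimage, mem_inter_iff, mem_Iio]
        by_cases hy : y < s <;> simp [hy, h]
      simp [e]
  · ext B hB
    have hm := hB.inter (measurableSet_Iio (a := s)).compl
    rw [Measure.smul_apply, Measure.restrict_apply hB, Measure.restrict_apply hB,
      Measure.map_apply hcm hm, Measure.map_apply hcm hm]
    have e : c ⁻¹' (B ∩ (Iio s)ᶜ) = B ∩ (Iio s)ᶜ := by
      ext y
      simp only [hc, mem_preimage, mem_inter_iff, mem_Iio, mem_compl_iff]
      by_cases hy : y < s <;> simp [hy, hs0]
    rw [e, hznu]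
    simp only [Measure.add_apply, Measure.smul_apply, smul_eq_mul]
    rw [Measure.dirac_apply' _ hm]
    simp [hs0]

lemma hz_null {n : ℕ} : ∀ᵐ x ∂(unifPi n), ∀ j, x j ∈ Icc (0:ℝ) 1 := by
  rw [ae_all_iff]
  intro j
  have h : ∀ᵐ y ∂unif01, y ∈ Icc (0:ℝ) 1 := ae_restrict_mem measurableSet_Icc
  exact (measurePreserving_eval (fun _ : Fin n => unif01) j).quasiMeasurePreserving.ae h

lemma hz_dkw {n : ℕ} (hn : 1 ≤ n) {ε : ℝ} (h0 : 0 < ε) (h1 : ε < 1) :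
    unifPi n {u | ∃ i : Fin n, sortedVec u i < ((i : ℕ) + 1) / n - ε} <
      ENNReal.ofReal (Real.exp (- (2 * n * ε ^ 2))) := by
  obtain ⟨θ, hθ0, hθ1, hkey⟩ := hz_key h0 h1
  have hνp := hznu_prob hθ0 hθ1
  have hn0 : (0:ℝ) < n := by exact_mod_cast hn
  set s : Fin n → ℝ := fun i => ((i : ℕ) + 1) / n - ε with hs
  have hsmono : StrictMono s := by
    intro i j hij
    have : ((i:ℕ):ℝ) < (j:ℕ) := by exact_mod_cast hij
    simp only [hs]; gcongr
  have hs1 : ∀ i, s i ≤ 1 - ε := by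
    intro i
    have : ((i:ℕ):ℝ) + 1 ≤ n := by exact_mod_cast i.2
    have : (((i:ℕ):ℝ) + 1) / n ≤ 1 := by rw [div_le_one hn0]; exact this
    simp only [hs]; linarith
  set A : Fin n → Set (Fin n → ℝ) := fun i =>
    {x | hzcnt x (Iio (s i)) = i + 1 ∧ ∀ k > i, hzcnt x (Iio (s k)) < k + 1} with hAdef
  have hAm : ∀ i, MeasurableSet (A i) := by
    intro i
    have e : A i = {x | hzcnt x (Iio (s i)) = i + 1} ∩
        ⋂ k, ⋂ (_ : k > i), {x | hzcnt x (Iio (s k)) < k + 1} := by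
      ext x; simp [hAdef]
    rw [e]
    refine (hzcnt_meas measurableSet_Iio (measurableSet_singleton _)).inter ?_
    refine MeasurableSet.iInter fun k => MeasurableSet.iInter fun _ => ?_
    exact hzcnt_meas measurableSet_Iio (measurableSet_Iio (a := (k:ℕ) + 1))
  have hAd : Pairwise (Function.onFun Disjoint A) := by
    intro i k hik
    refine Set.disjoint_left.2 fun x hx hx' => ?_
    rcases lt_or_gt_of_ne hik with h | h
    · have a1 := hx.2 k h
      have a2 := hx'.1
      omega
    · have a1 := hx'.2 i h
      have a2 := hx.1
      omega
  have hcmono : ∀ (x : Fin n → ℝ) {a b : ℝ}, a ≤ b → hzcnt x (Iio a) ≤ hzcnt x (Iio b) := by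
    intro x a b hab
    unfold hzcnt
    apply Finset.card_le_card
    intro j
    simp only [Finset.mem_filter, mem_Iio, Finset.mem_univ, true_and]
    intro h; linarith
  have hcov : {u : Fin n → ℝ | ∃ i : Fin n, sortedVec u i < ((i : ℕ) + 1) / n - ε} ⊆ ⋃ i, A i := by
    rintro u ⟨i, hi⟩
    classical
    have hi' : (i:ℕ) + 1 ≤ hzcnt u (Iio (s i)) := by
      have h := (Tuple.lt_card_lt_iff_apply_lt_of_monotone (Tuple.monotone_sort u) (j := i)
        (a := s i)).2 hi
      have h2 : (Finset.univ.filter fun k => (u ∘ Tuple.sort u) k < s i).card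
          = hzcnt u (Iio (s i)) := by
        unfold hzcnt
        refine Finset.card_bij (fun a _ => Tuple.sort u a) ?_ ?_ ?_
        · intro a ha; simpa using ha
        · intro a _ b _ h; exact (Tuple.sort u).injective h
        · intro b hb
          exact ⟨(Tuple.sort u).symm b, by simpa using hb, by simp⟩
      rw [h2] at h
      omega
    set F : Finset (Fin n) := Finset.univ.filter fun k => (k:ℕ) + 1 ≤ hzcnt u (Iio (s k)) with hF
    have hFne : F.Nonempty := ⟨i, by simp only [hF, Finset.mem_filter, Finset.mem_univ, true_and]; exact hi'⟩
    set k := F.max' hFne with hk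
    have hkF : k ∈ F := F.max'_mem hFne
    have hmax : ∀ l > k, hzcnt u (Iio (s l)) < l + 1 := by
      intro l hl
      by_contra hc
      have : l ∈ F := by simp only [hF, Finset.mem_filter, Finset.mem_univ, true_and]; omega
      exact absurd (F.le_max' l this) (not_le.2 hl)
    refine mem_iUnion.2 ⟨k, ?_, hmax⟩
    have hk1 : (k:ℕ) + 1 ≤ hzcnt u (Iio (s k)) := by simpa [hF] using hkF
    refine le_antisymm ?_ hk1
    by_cases hlast : (k:ℕ) + 1 < n
    · have hlt : k < ⟨(k:ℕ) + 1, hlast⟩ := by rw [Fin.lt_def]; simp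
      have a1 := hmax _ hlt
      have a2 := hcmono u (hsmono hlt).le
      simp only at a1
      omega
    · have : hzcnt u (Iio (s k)) ≤ n := by
        unfold hzcnt
        exact (Finset.card_le_univ _).trans (by simp)
      omega
  -- the weights
  set v : Fin n → ℝ := fun i => ((1 - θ * (1 - s i)) / s i) ^ ((i:ℕ) + 1) * θ ^ (n - ((i:ℕ) + 1))
    with hv
  have hvlt : ∀ i, 0 < s i → Real.exp (2 * n * ε ^ 2) < v i := by
    intro i hi
    have hk := hkey (1 - s i) (by linarith [hs1 i]) (by linarith)
    have hin : (i:ℕ) + 1 ≤ n := i.2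
    have hw : 0 < (1 - θ * (1 - s i)) / s i := div_pos (by nlinarith [hs1 i]) hi
    have e : v i = Real.exp (n * ((1 - s i - ε) * Real.log θ +
        (1 - (1 - s i) + ε) * Real.log ((1 - θ * (1 - s i)) / (1 - (1 - s i))))) := by
      have e1 : n * ((1 - s i - ε) * Real.log θ +
        (1 - (1 - s i) + ε) * Real.log ((1 - θ * (1 - s i)) / (1 - (1 - s i)))) =
        (((i:ℕ) + 1 : ℕ) : ℝ) * Real.log ((1 - θ * (1 - s i)) / s i)
          + ((n - ((i:ℕ) + 1) : ℕ) : ℝ) * Real.log θ := by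
        rw [show 1 - (1 - s i) = s i by ring, Nat.cast_sub hin]
        have : s i + ε = (((i:ℕ):ℝ) + 1) / n := by simp only [hs]; ring
        rw [this, show 1 - s i - ε = 1 - (s i + ε) by ring, this]
        push_cast
        field_simp
        ring
      rw [e1, Real.exp_add, Real.exp_nat_mul, Real.exp_nat_mul, Real.exp_log hw, Real.exp_log hθ0]
    rw [e, Real.exp_lt_exp]
    nlinarith
  obtain ⟨M, hM, hMv⟩ : ∃ M, Real.exp (2 * n * ε ^ 2) < M ∧ ∀ i, 0 < s i → M ≤ v i := by
    have : Nonempty (Fin n) := ⟨⟨0, hn⟩⟩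
    refine ⟨Finset.univ.inf' Finset.univ_nonempty
      (fun i => if 0 < s i then v i else Real.exp (2 * n * ε ^ 2) + 1), ?_, ?_⟩
    · rw [Finset.lt_inf'_iff]
      intro i _
      split_ifs with h
      · exact hvlt i h
      · linarith
    · intro i hi
      refine (Finset.inf'_le _ (Finset.mem_univ i)).trans ?_
      simp [hi]
  have hM0 : 0 < M := (Real.exp_pos _).trans hM
  have hAi : ∀ i, ENNReal.ofReal M * unifPi n (A i) ≤ Measure.pi (fun _ => hznu θ) (A i) := by
    intro i
    by_cases hi : 0 < s i
    · rw [hz_tilt hθ0 hθ1 hi (by linarith [hs1 i]) ((i:ℕ) + 1) (A i) (hAm i) (fun x hx => hx.1)]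
      · rw [← ENNReal.ofReal_pow (div_nonneg (by nlinarith [hs1 i]) hi.le),
          ← ENNReal.ofReal_pow hθ0.le, ← ENNReal.ofReal_mul
          (pow_nonneg (div_nonneg (by nlinarith [hs1 i]) hi.le) _)]
        gcongr
        exact hMv i hi
      · intro x
        have hcc : ∀ k, i ≤ k → hzcnt (fun j => if x j < s i then 0 else x j) (Iio (s k))
            = hzcnt x (Iio (s k)) := by
          intro k hk
          have hsk : s i ≤ s k := hsmono.monotone hk
          unfold hzcnt
          congr 1
          ext j
          simp only [Finset.mem_filter, mem_Iio, Finset.mem_univ, true_and]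
          split_ifs with h
          · constructor <;> intro <;> linarith
          · rfl
        simp only [hAdef, mem_ofPred_eq]
        rw [hcc i le_rfl]
        refine and_congr Iff.rfl (forall_congr' fun k => forall_congr' fun hk => ?_)
        rw [hcc k (le_of_lt hk)]
    · have : unifPi n (A i) = 0 := by
        refine measure_mono_null ?_ (ae_iff.1 (hz_null (n := n)))
        intro x hx hx'
        have a1 := hx.1
        have a2 : hzcnt x (Iio (s i)) = 0 := by
          unfold hzcnt
          rw [Finset.card_eq_zero, Finset.filter_eq_empty_iff]
          intro j _ hj
          have := (hx' j).1
          simp only [mem_Iio] at hj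
          linarith
        omega
      simp [this]
  have htot : ENNReal.ofReal M * unifPi n (⋃ i, A i) ≤ 1 := by
    rw [measure_iUnion hAd hAm, tsum_fintype, Finset.mul_sum]
    refine (Finset.sum_le_sum fun i _ => hAi i).trans ?_
    rw [← tsum_fintype (L := SummationFilter.unconditional _), ← measure_iUnion hAd hAm]
    exact prob_le_one
  have hle : unifPi n (⋃ i, A i) ≤ ENNReal.ofReal M⁻¹ := by
    rw [ENNReal.ofReal_inv_of_pos hM0]
    rw [← one_div]
    refine ENNReal.le_div_iff_mul_le (Or.inl (by simpa using hM0)) (Or.inl ENNReal.ofReal_ne_top) |>.2 ?_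
    rwa [mul_comm]
  refine ((measure_mono hcov).trans hle).trans_lt ?_
  rw [ENNReal.ofReal_lt_ofReal_iff (Real.exp_pos _), Real.exp_neg]
  exact inv_strictAnti₀ (Real.exp_pos _) hM

lemma hz_tele : ∀ {n : ℕ} (y : Fin (n + 1) → ℝ),
    ∑ i : Fin n, (y i.succ - y i.castSucc) = y (Fin.last n) - y 0 := by
  intro n
  induction n with
  | zero => intro y; simp
  | succ k ih =>
    intro y
    rw [Fin.sum_univ_castSucc]
    have := ih (fun i => y i.castSucc)
    simp only [Fin.succ_castSucc] at *
    rw [this]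
    simp

lemma hz_tele2 : ∀ {n : ℕ} (y : Fin (n + 1) → ℝ),
    ∑ i : Fin n, (((i:ℕ):ℝ) + 1) * (y i.succ - y i.castSucc) =
      n * y (Fin.last n) - ∑ i : Fin n, y i.castSucc := by
  intro n
  induction n with
  | zero => intro y; simp
  | succ k ih =>
    intro y
    rw [Fin.sum_univ_castSucc, Fin.sum_univ_castSucc (f := fun i : Fin (k + 1) => y i.castSucc)]
    have := ih (fun i => y i.castSucc)
    simp only [Fin.succ_castSucc, Fin.val_castSucc, Fin.val_last, Fin.succ_last] at *
    rw [this]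
    push_cast
    ring

lemma hz_snoc_castSucc {n : ℕ} (s : ℝ) (x : Fin n → ℝ) (i : Fin n) :
    (Fin.snoc (sortedVec x) s : Fin (n + 1) → ℝ) i.castSucc = sortedVec x i := by
  simp

lemma hz_gap {n : ℕ} {s : ℝ} {x : Fin n → ℝ} (hx : ∀ i, x i ≤ s) (i : Fin n) :
    0 ≤ (Fin.snoc (sortedVec x) s : Fin (n + 1) → ℝ) i.succ - sortedVec x i := by
  by_cases h : (i:ℕ) + 1 < n
  · have e : i.succ = (⟨(i:ℕ) + 1, h⟩ : Fin n).castSucc := by ext; simp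
    rw [e, hz_snoc_castSucc]
    have : sortedVec x i ≤ sortedVec x ⟨(i:ℕ) + 1, h⟩ :=
      Tuple.monotone_sort x (by rw [Fin.le_def]; simp)
    linarith
  · have e : i.succ = Fin.last n := by ext; simp; omega
    rw [e, Fin.snoc_last]
    have : sortedVec x i ≤ s := hx _
    linarith

lemma hz_mono {n : ℕ} {s : ℝ} {z u v : Fin n → ℝ} (hz : ∀ i, z i ≤ s)
    (huv : ∀ i, sortedVec v i ≤ sortedVec u i) : inducedMean s z u ≤ inducedMean s z v := by
  unfold inducedMean
  apply sub_le_sub_left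
  exact Finset.sum_le_sum fun i _ => mul_le_mul_of_nonneg_right (huv i) (hz_gap hz i)

lemma hz_gapsum {n : ℕ} (hn : 1 ≤ n) {a s : ℝ} {x : Fin n → ℝ} (hx : ∀ i, a ≤ x i) :
    ∑ i : Fin n, ((Fin.snoc (sortedVec x) s : Fin (n + 1) → ℝ) i.succ - sortedVec x i) ≤ s - a := by
  have := hz_tele (Fin.snoc (sortedVec x) s : Fin (n + 1) → ℝ)
  simp only [hz_snoc_castSucc, Fin.snoc_last] at this
  rw [this]
  have e : (0 : Fin (n + 1)) = (⟨0, hn⟩ : Fin n).castSucc := by ext; simp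
  rw [e, hz_snoc_castSucc]
  have : a ≤ sortedVec x ⟨0, hn⟩ := hx _
  linarith

lemma hz_sorted_of_mono {n : ℕ} {ℓ : Fin n → ℝ} (h : Monotone ℓ) : sortedVec ℓ = ℓ := by
  unfold sortedVec
  rw [Tuple.sort_eq_refl_iff_monotone.2 h]
  rfl

lemma hz_ge {n : ℕ} (hn : 1 ≤ n) {a b : ℝ} {x u : Fin n → ℝ} (hx : ∀ i, x i ∈ Icc a b)
    (hu : ∀ i, u i ∈ Icc (0:ℝ) 1) : a ≤ inducedMean b x u := by
  have h1 := hz_gapsum hn (s := b) (fun i => (hx i).1)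
  have h2 : ∑ i : Fin n, sortedVec u i *
      ((Fin.snoc (sortedVec x) b : Fin (n + 1) → ℝ) i.succ - sortedVec x i) ≤
      ∑ i : Fin n, ((Fin.snoc (sortedVec x) b : Fin (n + 1) → ℝ) i.succ - sortedVec x i) := by
    refine Finset.sum_le_sum fun i _ => ?_
    have h3 := hz_gap (s := b) (fun i => (hx i).2) i
    have h4 : sortedVec u i ≤ 1 := (hu _).2
    nlinarith
  unfold inducedMean
  linarith

lemma hz_le {n : ℕ} {b : ℝ} {x u : Fin n → ℝ} (hx : ∀ i, x i ≤ b)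
    (hu : ∀ i, u i ∈ Icc (0:ℝ) 1) : inducedMean b x u ≤ b := by
  unfold inducedMean
  have : 0 ≤ ∑ i : Fin n, sortedVec u i *
      ((Fin.snoc (sortedVec x) b : Fin (n + 1) → ℝ) i.succ - sortedVec x i) :=
    Finset.sum_nonneg fun i _ => mul_nonneg (hu _).1 (hz_gap hx i)
  linarith

lemma hz_T {n : ℕ} (hn : 1 ≤ n) {a b β : ℝ} (hβ : 0 ≤ β) {x ℓ : Fin n → ℝ}
    (hx : ∀ i, x i ∈ Icc a b) (hℓ : ∀ i : Fin n, ((i:ℕ) + 1) / n - β ≤ sortedVec ℓ i) :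
    inducedMean b x ℓ ≤ (∑ i, x i) / n + (b - a) * β := by
  have hn0 : (0:ℝ) < n := by exact_mod_cast hn
  have h1 := hz_gapsum hn (s := b) (fun i => (hx i).1)
  set d : Fin n → ℝ := fun i =>
    (Fin.snoc (sortedVec x) b : Fin (n + 1) → ℝ) i.succ - sortedVec x i with hd
  have hd0 : ∀ i, 0 ≤ d i := fun i => hz_gap (fun i => (hx i).2) i
  have h2 : ∑ i : Fin n, (((i:ℕ):ℝ) + 1) * d i = n * b - ∑ i, x i := by
    have := hz_tele2 (Fin.snoc (sortedVec x) b : Fin (n + 1) → ℝ)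
    simp only [hz_snoc_castSucc, Fin.snoc_last] at this
    rw [this]
    congr 1
    exact Equiv.sum_comp (Tuple.sort x) x
  have h3 : ∑ i : Fin n, ((((i:ℕ):ℝ) + 1) / n - β) * d i ≤ ∑ i : Fin n, sortedVec ℓ i * d i :=
    Finset.sum_le_sum fun i _ => mul_le_mul_of_nonneg_right (hℓ i) (hd0 i)
  have h4 : ∑ i : Fin n, ((((i:ℕ):ℝ) + 1) / n - β) * d i
      = (∑ i : Fin n, (((i:ℕ):ℝ) + 1) * d i) / n - β * ∑ i, d i := by
    rw [Finset.sum_div, Finset.mul_sum, ← Finset.sum_sub_distrib]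
    refine Finset.sum_congr rfl fun i _ => ?_
    ring
  have h5 : (n * b - ∑ i, x i) / n = b - (∑ i, x i) / n := by field_simp
  rw [h4, h2, h5] at h3
  unfold inducedMean
  change b - ∑ i, sortedVec ℓ i * d i ≤ _
  nlinarith

lemma hz_lt_one {n : ℕ} : ∀ᵐ x ∂(unifPi n), ∀ j, x j < 1 := by
  rw [ae_all_iff]
  intro j
  have h : ∀ᵐ y ∂unif01, y < 1 := by
    have : unif01 (Iio 1) = 1 := by rw [unif01_Iio zero_le_one le_rfl]; simp
    exact mem_ae_iff_prob_eq_one measurableSet_Iio |>.2 this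
  exact (measurePreserving_eval (fun _ : Fin n => unif01) j).quasiMeasurePreserving.ae h

lemma hz_ucb_le {n : ℕ} (hn : 1 ≤ n) {a b α : ℝ} (hα : α < 1) {ℓ x : Fin n → ℝ}
    (hE : ENNReal.ofReal (1 - α) ≤ unifPi n {u | ∀ i, sortedVec ℓ i ≤ sortedVec u i})
    (hx : ∀ i, x i ∈ Icc a b) :
    ucb (Set.Iic b) (fun y => inducedMean b y ℓ) α x ≤ inducedMean b x ℓ := by
  unfold ucb rquantile
  have hxS : x ∈ SsetD (Set.Iic b) (fun y => inducedMean b y ℓ) x :=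
    ⟨fun i => (hx i).2, le_rfl⟩
  apply csInf_le
  · refine ⟨a, fun y hy => ?_⟩
    by_contra hya
    push Not at hya
    have hz : unifPi n {u | bfun (Set.Iic b) (fun y => inducedMean b y ℓ) x u ≤ y} = 0 := by
      refine measure_mono_null ?_ (ae_iff.1 (hz_null (n := n)))
      intro u hu hu'
      have h1 : inducedMean b x u ≤ bfun (Set.Iic b) (fun y => inducedMean b y ℓ) x u := by
        unfold bfun
        rw [csSup_Iic]
        refine le_csSup ⟨b, ?_⟩ ⟨x, hxS, rfl⟩
        rintro _ ⟨z, hz, rfl⟩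
        exact hz_le hz.1 hu'
      have h2 := hz_ge hn hx hu'
      have h3 : bfun (Set.Iic b) (fun y => inducedMean b y ℓ) x u ≤ y := hu
      linarith
    have hy' : ENNReal.ofReal (1 - α) ≤ _ := hy
    rw [hz] at hy'
    have : 0 < ENNReal.ofReal (1 - α) := by simpa using hα
    exact absurd hy' (not_le.2 this)
  · refine hE.trans (measure_mono ?_)
    intro u hu
    change bfun _ _ _ _ ≤ _
    unfold bfun
    rw [csSup_Iic]
    refine csSup_le ⟨_, x, hxS, rfl⟩ ?_
    rintro _ ⟨z, hz, rfl⟩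
    exact (hz_mono hz.1 hu).trans hz.2

/-- Comparison with Hoeffding's bound: with `ℓ_i = max(0, i/n - β)`
where `β` is the one-sided Kolmogorov–Smirnov constant, `D⁺ = (-∞, b]`, and
`T(y) = m_{D⁺}(y, ℓ)`, for every `x ∈ [a,b]ⁿ` the UCB is at most Hoeffding's
`x̄ + (b-a)√(ln(1/α)/(2n))`, strictly when `n ≥ 3`. -/
theorem stmt12 {n : ℕ} (hn : 1 ≤ n) (a b : ℝ) (hab : a < b)
    (α : ℝ) (hα : α ∈ Set.Ioc (0:ℝ) (1/2)) (β : ℝ)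
    (hβ : unifPi n {u | ∀ i : Fin n, ((i : ℕ) + 1) / n - β ≤ sortedVec u i}
      = ENNReal.ofReal (1 - α))
    (ℓ : Fin n → ℝ) (hℓdef : ∀ i : Fin n, ℓ i = max 0 (((i : ℕ) + 1) / n - β)) :
    ∀ x : Fin n → ℝ, (∀ i, x i ∈ Set.Icc a b) →
      ucb (Set.Iic b) (fun y => inducedMean b y ℓ) α x
        ≤ (∑ i, x i) / n + (b - a) * Real.sqrt (Real.log (1 / α) / (2 * n)) ∧
      (3 ≤ n → ucb (Set.Iic b) (fun y => inducedMean b y ℓ) α x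
        < (∑ i, x i) / n + (b - a) * Real.sqrt (Real.log (1 / α) / (2 * n))) := by
  obtain ⟨hα0, hα1⟩ := hα
  have hn0 : (0:ℝ) < n := by exact_mod_cast hn
  have hβ0 : 0 < β := by
    by_contra hc
    push Not at hc
    have hz : unifPi n {u | ∀ i : Fin n, ((i : ℕ) + 1) / n - β ≤ sortedVec u i} = 0 := by
      refine measure_mono_null ?_ (ae_iff.1 (hz_lt_one (n := n)))
      intro u hu hu'
      have h1 : (((n - 1 : ℕ) : ℝ) + 1) / n - β ≤ sortedVec u ⟨n - 1, by omega⟩ :=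
        hu ⟨n - 1, by omega⟩
      have h2 : sortedVec u ⟨n - 1, by omega⟩ < 1 := hu' _
      rw [Nat.cast_sub hn] at h1
      simp only [Nat.cast_one, sub_add_cancel, div_self hn0.ne'] at h1
      linarith
    rw [hz] at hβ
    have : 0 < ENNReal.ofReal (1 - α) := by simp; linarith
    exact this.ne hβ
  have hβ1 : β < 1 := by
    by_contra hc
    push Not at hc
    have hz : unifPi n {u | ∀ i : Fin n, ((i : ℕ) + 1) / n - β ≤ sortedVec u i} = 1 := by
      rw [← measure_univ (μ := unifPi n)]
      refine measure_congr ?_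
      filter_upwards [hz_null (n := n)] with u hu
      refine eq_true ?_
      intro i
      have h1 : ((i:ℕ):ℝ) + 1 ≤ n := by exact_mod_cast i.2
      have h2 : (((i:ℕ):ℝ) + 1) / n ≤ 1 := by rw [div_le_one hn0]; exact h1
      have h3 : 0 ≤ sortedVec u i := (hu _).1
      linarith
    rw [hz] at hβ
    have : ENNReal.ofReal (1 - α) < 1 := by
      rw [← ENNReal.ofReal_one, ENNReal.ofReal_lt_ofReal_iff one_pos]; linarith
    exact this.ne hβ.symm
  have hlt : α < Real.exp (-(2 * n * β ^ 2)) := by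
    have h1 := hz_dkw hn hβ0 hβ1
    have h2 : (1 : ENNReal) ≤ ENNReal.ofReal (1 - α) +
        unifPi n {u | ∃ i : Fin n, sortedVec u i < ((i : ℕ) + 1) / n - β} := by
      rw [← hβ, ← measure_univ (μ := unifPi n)]
      refine le_trans (measure_mono ?_) (measure_union_le _ _)
      intro u _
      by_cases h : ∃ i : Fin n, sortedVec u i < ((i : ℕ) + 1) / n - β
      · exact Or.inr h
      · push Not at h
        exact Or.inl h
    have h3 : (1 : ENNReal) < ENNReal.ofReal (1 - α) +
        ENNReal.ofReal (Real.exp (-(2 * n * β ^ 2))) :=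
      h2.trans_lt (ENNReal.add_lt_add_left ENNReal.ofReal_ne_top h1)
    rw [← ENNReal.ofReal_add (by linarith) (Real.exp_pos _).le, ← ENNReal.ofReal_one,
      ENNReal.ofReal_lt_ofReal_iff (by linarith [Real.exp_pos (-(2 * n * β ^ 2))])] at h3
    linarith
  have hβlt : β < Real.sqrt (Real.log (1 / α) / (2 * n)) := by
    apply Real.lt_sqrt_of_sq_lt
    rw [lt_div_iff₀ (by positivity), one_div, Real.log_inv]
    have := Real.log_lt_log hα0 hlt
    rw [Real.log_exp] at this
    linarith
  have hmono : Monotone ℓ := by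
    intro i j hij
    rw [hℓdef, hℓdef]
    have : ((i:ℕ):ℝ) ≤ (j:ℕ) := by exact_mod_cast hij
    gcongr
  have hsort : sortedVec ℓ = ℓ := hz_sorted_of_mono hmono
  intro x hx
  have hE : ENNReal.ofReal (1 - α) ≤ unifPi n {u | ∀ i, sortedVec ℓ i ≤ sortedVec u i} := by
    rw [← hβ]
    refine measure_mono_ae ?_
    filter_upwards [hz_null (n := n)] with u hu h
    intro i
    rw [hsort, hℓdef]
    exact max_le (hu _).1 (h i)
  have h1 := hz_ucb_le hn (by linarith) hE hx
  have h2 := hz_T hn hβ0.le hx (ℓ := ℓ) (β := β)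
    (fun i => by rw [hsort, hℓdef]; exact le_max_right _ _)
  have h3 : ucb (Set.Iic b) (fun y => inducedMean b y ℓ) α x
        < (∑ i, x i) / n + (b - a) * Real.sqrt (Real.log (1 / α) / (2 * n)) := by
    have : (b - a) * β < (b - a) * Real.sqrt (Real.log (1 / α) / (2 * n)) :=
      mul_lt_mul_of_pos_left hβlt (by linarith)
    linarith
  exact ⟨h3.le, fun _ => h3⟩
end

section
/- (Reduction to and improvement over Anderson's bound on a two-ended support.) Let a < b, D⁺ := [a,b], α ∈ (0,1), and let ℓ ∈ [0,1]ⁿ with largest order statistic ℓ_{(n)} > 0; let i₀ := min{ i : ℓ_{(i)} > 0 }. Suppose P( U_{(i)} ≥ ℓ_{(i)} for all 1 ≤ i ≤ n ) = 1 − α, where U = (U_1,…,U_n) are i.i.d. Uniform(0,1) with order statistics U_{(1)} ≤ … ≤ U_{(n)}. Let x ∈ [a,b]ⁿ and use the ordering function T(y) := m_{D⁺}(y,ℓ). Then: (i) if a ≤ b − (b − m_{D⁺}(x,ℓ))/ℓ_{(i₀)}, then b^α_{D⁺,T}(x) = m_{D⁺}(x,ℓ); and (ii) if a > b − (b − m_{D⁺}(x,ℓ))/ℓ_{(i₀)}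 and n > i₀, then b^α_{D⁺,T}(x) < m_{D⁺}(x,ℓ). -/
open MeasureTheory Set

/-- gaps of the sorted vector -/
noncomputable def gapV {n : ℕ} (s : ℝ) (x : Fin n → ℝ) (i : Fin n) : ℝ :=
  (Fin.snoc (sortedVec x) s : Fin (n+1) → ℝ) i.succ - sortedVec x i

lemma inducedMean_eq {n : ℕ} (s : ℝ) (x u : Fin n → ℝ) :
    inducedMean s x u = s - ∑ i, sortedVec u i * gapV s x i := rfl

lemma sortedVec_mono {n : ℕ} (x : Fin n → ℝ) : Monotone (sortedVec x) := Tuple.monotone_sort x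

lemma sortedVec_of_mono {n : ℕ} (x : Fin n → ℝ) (h : Monotone x) : sortedVec x = x := by
  unfold sortedVec
  rw [Tuple.sort_eq_refl_iff_monotone.2 h]; rfl

lemma snoc_succ_eq {n : ℕ} (s : ℝ) (v : Fin n → ℝ) (j : Fin n) :
    (Fin.snoc v s : Fin (n+1) → ℝ) j.succ = if h : (j:ℕ)+1 < n then v ⟨j+1, h⟩ else s := by
  simp [Fin.snoc]
  rfl

lemma gapV_nonneg {n : ℕ} (s : ℝ) (x : Fin n → ℝ) (hx : ∀ i, x i ≤ s) (i : Fin n) :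
    0 ≤ gapV s x i := by
  unfold gapV
  rw [snoc_succ_eq, sub_nonneg]
  split_ifs with h
  · exact sortedVec_mono x (by simp [Fin.le_def])
  · exact hx _

lemma gapV_sum_le {n : ℕ} (hn : 0 < n) (a s : ℝ) (x : Fin n → ℝ) (hx : ∀ i, a ≤ x i) :
    ∑ i, gapV s x i ≤ s - a := by
  have h1 := Fin.sum_univ_succ (Fin.snoc (sortedVec x) s : Fin (n+1) → ℝ)
  have h2 := Fin.sum_univ_castSucc (Fin.snoc (sortedVec x) s : Fin (n+1) → ℝ)
  have h3 : a ≤ (Fin.snoc (sortedVec x) s : Fin (n+1) → ℝ) 0 := by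
    have : (0 : Fin (n+1)) = (⟨0, hn⟩ : Fin n).castSucc := rfl
    rw [this, Fin.snoc_castSucc]
    exact hx _
  simp only [Fin.snoc_castSucc, Fin.snoc_last] at h2
  unfold gapV
  rw [Finset.sum_sub_distrib]
  linarith

/-- two-point vector -/
noncomputable def stepV {n : ℕ} (b t : ℝ) (i : Fin n) : Fin n → ℝ :=
  fun j => if j ≤ i then b - t else b

lemma stepV_mean {n : ℕ} (b t : ℝ) (ht : 0 ≤ t) (i : Fin n) (u : Fin n → ℝ) :
    inducedMean b (stepV b t i) u = b - sortedVec u i * t := by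
  have hm : Monotone (stepV b t i) := by
    intro j k hjk
    unfold stepV
    split_ifs with h1 h2 h2
    · exact le_rfl
    · linarith
    · exact absurd (hjk.trans h2) h1
    · exact le_rfl
  rw [inducedMean_eq]
  have hg : ∀ j, gapV b (stepV b t i) j = if j = i then t else 0 := by
    intro j
    unfold gapV
    rw [sortedVec_of_mono _ hm, snoc_succ_eq]
    have hj := j.2
    have hi := i.2
    unfold stepV
    simp only [Fin.le_def, Fin.ext_iff]
    split_ifs <;> first | omega | ring
  simp [hg]

lemma mean_le {n : ℕ} (b : ℝ) (x u : Fin n → ℝ) (hx : ∀ i, x i ≤ b) (hu : ∀ i, 0 ≤ u i) :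
    inducedMean b x u ≤ b := by
  rw [inducedMean_eq]
  have : 0 ≤ ∑ i, sortedVec u i * gapV b x i :=
    Finset.sum_nonneg fun i _ => mul_nonneg (hu _) (gapV_nonneg b x hx i)
  linarith

lemma le_mean {n : ℕ} (hn : 0 < n) (a b : ℝ) (x u : Fin n → ℝ) (hx : ∀ i, x i ∈ Icc a b)
    (hu : ∀ i, u i ≤ 1) :
    a ≤ inducedMean b x u := by
  rw [inducedMean_eq]
  have h1 : ∑ i, sortedVec u i * gapV b x i ≤ ∑ i, gapV b x i :=
    Finset.sum_le_sum fun i _ =>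
      mul_le_of_le_one_left (gapV_nonneg b x (fun i => (hx i).2) i) (hu _)
  have := gapV_sum_le hn a b x (fun i => (hx i).1)
  linarith

lemma mean_le_bfun {n : ℕ} (a b : ℝ) (hab : a < b) (T : (Fin n → ℝ) → ℝ) (x z u : Fin n → ℝ)
    (hu : ∀ i, 0 ≤ u i) (hz : ∀ i, z i ∈ Icc a b) (hT : T z ≤ T x) :
    inducedMean b z u ≤ bfun (Icc a b) T x u := by
  unfold bfun
  rw [csSup_Icc hab.le]
  refine le_csSup ⟨b, ?_⟩ ⟨z, ⟨hz, hT⟩, rfl⟩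
  rintro _ ⟨w, hw, rfl⟩
  exact mean_le b w u (fun i => (hw.1 i).2) hu

lemma bfun_le {n : ℕ} (a b : ℝ) (hab : a < b) (T : (Fin n → ℝ) → ℝ) (x u : Fin n → ℝ)
    (hx : ∀ i, x i ∈ Icc a b) (y : ℝ)
    (h : ∀ z : Fin n → ℝ, (∀ i, z i ∈ Icc a b) → T z ≤ T x → inducedMean b z u ≤ y) :
    bfun (Icc a b) T x u ≤ y := by
  unfold bfun
  rw [csSup_Icc hab.le]
  refine csSup_le ⟨_, x, ⟨hx, le_rfl⟩, rfl⟩ ?_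
  rintro _ ⟨w, hw, rfl⟩
  exact h w hw.1 hw.2

lemma ae_coord {n : ℕ} (p : ℝ → Prop) (h : ∀ᵐ t ∂unif01, p t) :
    ∀ᵐ u ∂(unifPi n), ∀ j, p (u j) := by
  rw [ae_all_iff]
  intro j
  exact (Measure.quasiMeasurePreserving_eval (fun _ : Fin n => unif01) j).ae h

lemma ae_ne (c : ℝ) : ∀ᵐ t ∂unif01, t ≠ c := by
  have : ∀ᵐ t ∂(volume : Measure ℝ), t ≠ c := by simp [ae_iff]
  exact ae_restrict_of_ae this

lemma ae_good {n : ℕ} (L : Fin n → ℝ) :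
    ∀ᵐ u ∂(unifPi n), ∀ j, u j ∈ Ioo (0:ℝ) 1 ∧ ∀ i, u j ≠ L i := by
  apply ae_coord (fun t => t ∈ Ioo (0:ℝ) 1 ∧ ∀ i, t ≠ L i)
  have h1 : ∀ᵐ t ∂unif01, t ∈ Icc (0:ℝ) 1 := ae_restrict_mem measurableSet_Icc
  have h2 : ∀ᵐ t ∂unif01, ∀ i, t ≠ L i := ae_all_iff.2 fun i => ae_ne _
  filter_upwards [h1, h2, ae_ne 0, ae_ne 1] with t h1 h2 h3 h4
  exact ⟨⟨lt_of_le_of_ne h1.1 (Ne.symm h3), lt_of_le_of_ne h1.2 h4⟩, h2⟩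

lemma box_pos {n : ℕ} (p q : Fin n → ℝ) (h0 : ∀ i, 0 ≤ p i) (h : ∀ i, p i < q i)
    (h1 : ∀ i, q i ≤ 1) : 0 < unifPi n (Set.pi univ fun i => Ioo (p i) (q i)) := by
  unfold unifPi
  rw [Measure.pi_pi, pos_iff_ne_zero, Finset.prod_ne_zero_iff]
  intro i _
  unfold unif01
  rw [Measure.restrict_apply measurableSet_Ioo, Set.inter_eq_left.2, Real.volume_Ioo]
  · simpa using h i
  · intro t ht
    exact ⟨(h0 i).trans ht.1.le, ht.2.le.trans (h1 i)⟩

lemma box_meas {n : ℕ} (p q : Fin n → ℝ) :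
    MeasurableSet (Set.pi univ fun i => Ioo (p i) (q i)) :=
  MeasurableSet.univ_pi fun _ => measurableSet_Ioo

lemma sorted_gt {n : ℕ} (u : Fin n → ℝ) (k i : Fin n) (t : ℝ) (hk : k < i)
    (h : ∀ j, k < j → t < u j) : t < sortedVec u i := by
  by_contra hc
  push Not at hc
  have : (Finset.Iic i).card ≤ (Finset.Iic k).card := by
    apply Finset.card_le_card_of_injOn (Tuple.sort u)
    · intro j hj
      simp only [Finset.coe_Iic, Set.mem_Iic] at hj ⊢
      by_contra hjk
      have h1 := h _ (not_le.1 hjk)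
      have h2 := sortedVec_mono u hj
      have h3 : sortedVec u j = u (Tuple.sort u j) := rfl
      linarith
    · exact (Tuple.sort u).injective.injOn
  simp only [Fin.card_Iic] at this
  have := Fin.lt_def.1 hk
  omega

lemma sorted_lt {n : ℕ} (u : Fin n → ℝ) (k : Fin n) (t : ℝ)
    (h : ∀ j, j ≤ k → u j < t) : sortedVec u k < t := by
  by_contra hc
  push Not at hc
  have : (Finset.Ici k).card ≤ (Finset.Ioi k).card := by
    apply Finset.card_le_card_of_injOn (Tuple.sort u)
    · intro j hj
      simp only [Finset.coe_Ici, Finset.coe_Ioi, Set.mem_Ici, Set.mem_Ioi] at hj ⊢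
      by_contra hjk
      have h1 := h _ (not_lt.1 hjk)
      have h2 := sortedVec_mono u hj
      have h3 : sortedVec u j = u (Tuple.sort u j) := rfl
      linarith
    · exact (Tuple.sort u).injective.injOn
  simp only [Fin.card_Ici, Fin.card_Ioi] at this
  have := k.2
  omega

/-- Reduction to, and improvement over, Anderson's bound on
`D⁺ = [a,b]`: with `T(y) = m_{D⁺}(y, ℓ)` and `i₀` the least (sorted) index with
`ℓ_{(i₀)} > 0`, (i) if `a ≤ b - (b - m_{D⁺}(x,ℓ))/ℓ_{(i₀)}` then
`b^α_{D⁺,T}(x) = m_{D⁺}(x,ℓ)`; (ii) if `a > b - (b - m_{D⁺}(x,ℓ))/ℓ_{(i₀)}` and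
`n > i₀`, then `b^α_{D⁺,T}(x) < m_{D⁺}(x,ℓ)`. -/
theorem stmt19 {n : ℕ} (hn : 0 < n) (a b : ℝ) (hab : a < b)
    (α : ℝ) (hα : α ∈ Set.Ioo (0:ℝ) 1)
    (ℓ : Fin n → ℝ) (hℓ : ∀ i, ℓ i ∈ Set.Icc (0:ℝ) 1)
    (i₀ : Fin n) (hi₀pos : 0 < sortedVec ℓ i₀)
    (hi₀min : ∀ j : Fin n, j < i₀ → sortedVec ℓ j ≤ 0)
    (hcov : unifPi n {u | ∀ i : Fin n, sortedVec ℓ i ≤ sortedVec u i}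
      = ENNReal.ofReal (1 - α)) :
    ∀ x : Fin n → ℝ, (∀ i, x i ∈ Set.Icc a b) →
      (a ≤ b - (b - inducedMean b x ℓ) / sortedVec ℓ i₀ →
        ucb (Set.Icc a b) (fun y => inducedMean b y ℓ) α x = inducedMean b x ℓ) ∧
      (b - (b - inducedMean b x ℓ) / sortedVec ℓ i₀ < a → (i₀ : ℕ) + 1 < n →
        ucb (Set.Icc a b) (fun y => inducedMean b y ℓ) α x < inducedMean b x ℓ) := by
  intro x hx
  have hαpos : 0 < ENNReal.ofReal (1 - α) := by
    rw [ENNReal.ofReal_pos]; linarith [hα.2]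
  set L := sortedVec ℓ with hL
  have hLmono : Monotone L := sortedVec_mono ℓ
  have hL01 : ∀ i, L i ∈ Icc (0:ℝ) 1 := fun i => hℓ _
  obtain ⟨N, hN⟩ : ∃ N : Fin n, ∀ i, i ≤ N :=
    ⟨⟨n-1, by omega⟩, fun i => by rw [Fin.le_def]; have := i.2; simp; omega⟩
  have hgood := ae_good L
  have hLN : L N < 1 := by
    by_contra hc
    push Not at hc
    have : unifPi n {u | ∀ i : Fin n, L i ≤ sortedVec u i} = 0 := by
      rw [measure_eq_zero_iff_ae_notMem]
      filter_upwards [hgood] with u hu hE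
      have h1 := hE N
      have h2 := (hu (Tuple.sort u N)).1.2
      have h3 : sortedVec u N = u (Tuple.sort u N) := rfl
      linarith
    rw [this] at hcov
    exact hαpos.ne hcov
  have hLNpos : 0 < L N := hi₀pos.trans_le (hLmono (hN i₀))
  set m := inducedMean b x ℓ with hm
  have hmb : m ≤ b := mean_le b x ℓ (fun i => (hx i).2) (fun i => (hℓ i).1)
  -- lower bound
  have hbdd : ∀ y ∈ {y : ℝ | ENNReal.ofReal (1 - α) ≤
      unifPi n {ω | bfun (Icc a b) (fun y => inducedMean b y ℓ) x ω ≤ y}}, a ≤ y := by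
    intro y hy
    by_contra hc
    push Not at hc
    have : unifPi n {ω | bfun (Icc a b) (fun y => inducedMean b y ℓ) x ω ≤ y} = 0 := by
      rw [measure_eq_zero_iff_ae_notMem]
      filter_upwards [hgood] with u hu hE
      have h1 := mean_le_bfun a b hab (fun y => inducedMean b y ℓ) x x u
        (fun i => (hu i).1.1.le) hx le_rfl
      have h2 := le_mean hn a b x u hx (fun i => (hu i).1.2.le)
      have h3 : bfun (Icc a b) (fun y => inducedMean b y ℓ) x u ≤ y := hE
      linarith
    rw [mem_ofPred_eq, this] at hy
    exact absurd hy (not_le.2 hαpos)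
  constructor
  · intro hcond
    unfold ucb rquantile
    apply IsLeast.csInf_eq
    constructor
    · rw [mem_ofPred_eq, ← hcov]
      apply measure_mono
      intro u hu
      refine bfun_le a b hab _ x u hx _ ?_
      intro z hz hzT
      refine le_trans ?_ hzT
      show inducedMean b z u ≤ inducedMean b z ℓ
      rw [inducedMean_eq, inducedMean_eq]
      have : ∑ i, sortedVec ℓ i * gapV b z i ≤ ∑ i, sortedVec u i * gapV b z i :=
        Finset.sum_le_sum fun i _ =>
          mul_le_mul_of_nonneg_right (hu i) (gapV_nonneg b z (fun i => (hz i).2) i)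
      linarith
    · intro y hy
      by_contra hc
      push Not at hc
      rw [mem_ofPred_eq] at hy
      -- consequence of bfun ≤ y
      have key : ∀ u : Fin n → ℝ, (∀ j, u j ∈ Ioo (0:ℝ) 1) →
          bfun (Icc a b) (fun y => inducedMean b y ℓ) x u ≤ y → ∀ i, i₀ ≤ i →
          (b - y) * L i ≤ sortedVec u i * (b - m) := by
        intro u hu hb i hi
        have hLi : 0 < L i := hi₀pos.trans_le (hLmono hi)
        have ht : 0 ≤ (b - m) / L i := div_nonneg (by linarith) hLi.le
        have ht2 : (b - m) / L i ≤ b - a := by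
          have : (b - m) / L i ≤ (b - m) / L i₀ :=
            div_le_div_of_nonneg_left (by linarith) hi₀pos (hLmono hi)
          linarith
        have h1 := mean_le_bfun a b hab (fun y => inducedMean b y ℓ) x
          (stepV b ((b - m) / L i) i) u (fun i => (hu i).1.le) ?_ ?_
        · rw [stepV_mean b _ ht] at h1
          have h2 : b - y ≤ sortedVec u i * ((b - m) / L i) := by linarith
          rw [← mul_div_assoc, le_div_iff₀ hLi] at h2
          exact h2
        · intro j
          unfold stepV
          split_ifs
          · constructor <;> linarith
          · constructor <;> linarith
        · show inducedMean b _ ℓ ≤ m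
          rw [stepV_mean b _ ht, ← hL]
          have : L i * ((b - m) / L i) = b - m := by field_simp
          linarith
      rcases eq_or_lt_of_le hmb with hmb' | hmb'
      · have : unifPi n {ω | bfun (Icc a b) (fun y => inducedMean b y ℓ) x ω ≤ y} = 0 := by
          rw [measure_eq_zero_iff_ae_notMem]
          filter_upwards [hgood] with u hu hE
          have h1 := key u (fun j => (hu j).1) hE i₀ le_rfl
          rw [hmb', sub_self, mul_zero] at h1
          have : 0 < (b - y) * L i₀ := mul_pos (by linarith) hi₀pos
          linarith
        rw [this] at hy
        exact absurd hy (not_le.2 hαpos)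
      · set q := min 1 ((b - y) * L N / (b - m)) with hq
        have hbm : 0 < b - m := by linarith
        have hqL : L N < q := by
          apply lt_min hLN
          rw [lt_div_iff₀ hbm, mul_comm]
          exact mul_lt_mul_of_pos_right (by linarith) hLNpos
        have hBpos := box_pos (fun _ : Fin n => L N) (fun _ => q) (fun _ => hLNpos.le)
          (fun _ => hqL) (fun _ => min_le_left _ _)
        set B := Set.pi univ fun _ : Fin n => Ioo (L N) q with hB
        set A := {u : Fin n → ℝ | bfun (Icc a b) (fun y => inducedMean b y ℓ) x u ≤ y} ∩
          {u | ∀ j, u j ∈ Ioo (0:ℝ) 1} with hA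
        have hAm : unifPi n {ω | bfun (Icc a b) (fun y => inducedMean b y ℓ) x ω ≤ y}
            ≤ unifPi n A := by
          apply measure_mono_ae
          filter_upwards [hgood] with u hu hE
          exact ⟨hE, fun j => (hu j).1⟩
        have hdisj : Disjoint A B := by
          rw [Set.disjoint_left]
          intro u hu hB
          have h1 := key u hu.2 hu.1 N (hN _)
          have h2 : sortedVec u N < q := (hB (Tuple.sort u N) (mem_univ _)).2
          have h3 := h2.trans_le (min_le_right _ _)
          rw [lt_div_iff₀ hbm] at h3
          linarith
        have hsub : A ∪ B ⊆ {u | ∀ i : Fin n, L i ≤ sortedVec u i} := by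
          rintro u (hu | hu) i
          · rcases lt_or_ge i i₀ with hi | hi
            · exact (hi₀min i hi).trans (hu.2 _).1.le
            · have h1 := key u hu.2 hu.1 i hi
              have h2 : (b - m) * L i ≤ (b - y) * L i :=
                mul_le_mul_of_nonneg_right (by linarith) (hL01 i).1
              have h3 : L i * (b - m) ≤ sortedVec u i * (b - m) := by linarith
              exact le_of_mul_le_mul_right h3 hbm
          · exact (hLmono (hN i)).trans (hu (Tuple.sort u i) (mem_univ _)).1.le
        have h1 : unifPi n A + unifPi n B ≤ ENNReal.ofReal (1 - α) := by
          rw [← hcov, ← measure_union hdisj (box_meas _ _)]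
          exact measure_mono hsub
        have h2 : unifPi n A < unifPi n A + unifPi n B :=
          ENNReal.lt_add_right (measure_ne_top _ _) hBpos.ne'
        exact absurd (hy.trans hAm) (not_le.2 (h2.trans_le h1))
  · intro hcond hi₀n
    have hc : (b - a) * L i₀ < b - m := by
      rw [← lt_div_iff₀ hi₀pos]; linarith
    have hcpos : 0 < b - m := (mul_pos (by linarith) hi₀pos).trans hc
    set κ := ((b - m) - (b - a) * L i₀) / L N with hκ
    have hκpos : 0 < κ := div_pos (by linarith) hLNpos
    set η' := (1 - L N) / 2 with hη'
    have hη'pos : 0 < η' := by rw [hη']; linarith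
    set η := min (L i₀ / 2) (η' * κ / (2 * (b - a))) with hη
    have hwpos : 0 < b - a := by linarith
    have hηpos : 0 < η := lt_min (by linarith) (by positivity)
    have hη1 : η ≤ L i₀ / 2 := min_le_left _ _
    have hη2 : η * (b - a) ≤ η' * κ / 2 := by
      have : η ≤ η' * κ / (2 * (b - a)) := min_le_right _ _
      rw [le_div_iff₀ (by positivity)] at this
      linarith
    set F := Set.pi univ fun i : Fin n =>
      Ioo ((fun i => if i ≤ i₀ then L i₀ - η else L N + η') i)
        ((fun i => if i ≤ i₀ then L i₀ else 1) i) with hF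
    have hFpos : 0 < unifPi n F := by
      apply box_pos
      · intro i; split_ifs <;> linarith
      · intro i; split_ifs <;> linarith
      · intro i; split_ifs
        · exact (hL01 _).2
        · exact le_rfl
    set E₁ := {u : Fin n → ℝ | ∀ i, L i < sortedVec u i} with hE₁
    have hE₁m : ENNReal.ofReal (1 - α) ≤ unifPi n E₁ := by
      rw [← hcov]
      apply measure_mono_ae
      filter_upwards [hgood] with u hu hE
      intro i
      exact lt_of_le_of_ne (hE i) (Ne.symm ((hu (Tuple.sort u i)).2 i))
    have hdisj : Disjoint E₁ F := by
      rw [Set.disjoint_left]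
      intro u hu hB
      have h1 := hu i₀
      have h2 : sortedVec u i₀ < L i₀ := by
        apply sorted_lt
        intro j hj
        have := (hB j (mem_univ _)).2
        simpa [hj] using this
      linarith
    -- feasibility facts
    have hfeas : ∀ z : Fin n → ℝ, inducedMean b z ℓ ≤ m →
        b - m ≤ ∑ i, L i * gapV b z i := by
      intro z hz
      rw [inducedMean_eq] at hz
      linarith
    have hE₁b : ∀ u ∈ E₁, bfun (Icc a b) (fun y => inducedMean b y ℓ) x u < m := by
      intro u hu
      obtain ⟨δ, hδ, hδu⟩ : ∃ δ > 0, ∀ i, L i + δ ≤ sortedVec u i := by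
        obtain ⟨k, hk⟩ := @Finite.exists_min _ _ _ ⟨N⟩ _ (fun i => sortedVec u i - L i)
        refine ⟨sortedVec u k - L k, by linarith [hu k], fun i => by linarith [hk i]⟩
      have : bfun (Icc a b) (fun y => inducedMean b y ℓ) x u ≤ m - δ * (b - m) := by
        apply bfun_le a b hab _ x u hx
        intro z hz hzT
        have hg := gapV_nonneg b z (fun i => (hz i).2)
        have h1 := hfeas z hzT
        rw [inducedMean_eq]
        have h2 : ∑ i, (L i * gapV b z i + δ * gapV b z i) ≤ ∑ i, sortedVec u i * gapV b z i :=
          Finset.sum_le_sum fun i _ => by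
            rw [← add_mul]; exact mul_le_mul_of_nonneg_right (hδu i) (hg i)
        rw [Finset.sum_add_distrib, ← Finset.mul_sum] at h2
        have h3 : ∑ i, L i * gapV b z i ≤ ∑ i, gapV b z i :=
          Finset.sum_le_sum fun i _ => mul_le_of_le_one_left (hg i) (hL01 i).2
        have h4 : δ * (b - m) ≤ δ * ∑ i, gapV b z i :=
          mul_le_mul_of_nonneg_left (h1.trans h3) hδ.le
        linarith
      have := mul_pos hδ hcpos
      linarith
    have hFb : ∀ u ∈ F, bfun (Icc a b) (fun y => inducedMean b y ℓ) x u < m := by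
      intro u hu
      have hu1 : ∀ i, L i₀ - η ≤ sortedVec u i := by
        intro i
        have h1 := (hu (Tuple.sort u i) (mem_univ _)).1
        have h2 : L i₀ ≤ L N := hLmono (hN _)
        change _ < sortedVec u i at h1
        dsimp only at h1
        split_ifs at h1 <;> linarith
      have hu2 : ∀ i, i₀ < i → L N + η' < sortedVec u i := by
        intro i hi
        apply sorted_gt u i₀ i _ hi
        intro j hj
        have := (hu j (mem_univ _)).1
        simpa [not_le.2 hj] using this
      have : bfun (Icc a b) (fun y => inducedMean b y ℓ) x u ≤ m - η' * κ / 2 := by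
        apply bfun_le a b hab _ x u hx
        intro z hz hzT
        have hg := gapV_nonneg b z (fun i => (hz i).2)
        have hgs := gapV_sum_le hn a b z (fun i => (hz i).1)
        have h1 := hfeas z hzT
        rw [inducedMean_eq]
        set G := ∑ i, (if i₀ < i then gapV b z i else 0) with hG
        have hg0 : gapV b z i₀ ≤ b - a :=
          (Finset.single_le_sum (f := fun i => gapV b z i) (fun i _ => hg i)
            (Finset.mem_univ i₀)).trans hgs
        have hs0 : ∀ t : ℝ, ∑ i, (if i = i₀ then t else 0) = t := by intro t; simp
        -- G is bounded below
        have h2 : ∑ i, L i * gapV b z i ≤ ∑ i, ((if i = i₀ then L i₀ * gapV b z i₀ else 0) +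
            L N * (if i₀ < i then gapV b z i else 0)) := by
          apply Finset.sum_le_sum
          intro i _
          rcases lt_trichotomy i i₀ with h | h | h
          · rw [if_neg h.ne, if_neg h.asymm]
            have := mul_nonneg (sub_nonneg.2 (hi₀min i h)) (hg i)
            linarith
          · subst h; simp
          · rw [if_neg h.ne', if_pos h]
            have := mul_le_mul_of_nonneg_right (hLmono (hN i)) (hg i)
            linarith
        rw [Finset.sum_add_distrib, hs0, ← Finset.mul_sum, ← hG] at h2
        have hGκ : κ ≤ G := by
          rw [hκ, div_le_iff₀ hLNpos]
          have := mul_le_mul_of_nonneg_left hg0 hi₀pos.le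
          linarith
        have h3 : ∑ i, (L i * gapV b z i + ((if i = i₀ then -(η * gapV b z i₀) else 0) +
            η' * (if i₀ < i then gapV b z i else 0))) ≤ ∑ i, sortedVec u i * gapV b z i := by
          apply Finset.sum_le_sum
          intro i _
          rcases lt_trichotomy i i₀ with h | h | h
          · rw [if_neg h.ne, if_neg h.asymm]
            have h5 : L i ≤ sortedVec u i := by linarith [hi₀min i h, hu1 i]
            have := mul_le_mul_of_nonneg_right h5 (hg i)
            linarith
          · subst h
            have := mul_le_mul_of_nonneg_right (hu1 i) (hg i)
            simp
            linarith
          · rw [if_neg h.ne', if_pos h]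
            have h5 : L i + η' ≤ sortedVec u i := by linarith [hu2 i h, hLmono (hN i)]
            have := mul_le_mul_of_nonneg_right h5 (hg i)
            linarith
        rw [Finset.sum_add_distrib, Finset.sum_add_distrib, hs0, ← Finset.mul_sum, ← hG] at h3
        have h6 := mul_le_mul_of_nonneg_left hg0 hηpos.le
        have h7 := mul_le_mul_of_nonneg_left hGκ hη'pos.le
        linarith
      have := mul_pos hη'pos hκpos
      linarith
    have hbig : ENNReal.ofReal (1 - α) <
        unifPi n {u | bfun (Icc a b) (fun y => inducedMean b y ℓ) x u < m} := by
      calc ENNReal.ofReal (1 - α) < ENNReal.ofReal (1 - α) + unifPi n F :=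
            ENNReal.lt_add_right ENNReal.ofReal_ne_top hFpos.ne'
        _ ≤ unifPi n E₁ + unifPi n F := by gcongr
        _ = unifPi n (E₁ ∪ F) := (measure_union hdisj (box_meas _ _)).symm
        _ ≤ _ := measure_mono (by
            rintro u (hu | hu)
            · exact hE₁b u hu
            · exact hFb u hu)
    have hU : {u | bfun (Icc a b) (fun y => inducedMean b y ℓ) x u < m} =
        ⋃ k : ℕ, {u | bfun (Icc a b) (fun y => inducedMean b y ℓ) x u ≤ m - 1 / ((k:ℝ) + 1)} := by
      ext u
      simp only [mem_ofPred_eq, mem_iUnion]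
      constructor
      · intro h
        obtain ⟨k, hk⟩ := exists_nat_one_div_lt (sub_pos.2 h)
        exact ⟨k, by linarith⟩
      · rintro ⟨k, hk⟩
        have : 0 < 1 / ((k:ℝ) + 1) := by positivity
        linarith
    have hmonoU : Monotone fun k : ℕ =>
        {u | bfun (Icc a b) (fun y => inducedMean b y ℓ) x u ≤ m - 1 / ((k:ℝ) + 1)} := by
      intro k l hkl u hu
      have hu' : bfun (Icc a b) (fun y => inducedMean b y ℓ) x u ≤ m - 1 / ((k:ℝ) + 1) := hu
      have : 1 / ((l:ℝ) + 1) ≤ 1 / ((k:ℝ) + 1) := one_div_le_one_div_of_le (by positivity)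
        (by have : (k:ℝ) ≤ l := by exact_mod_cast hkl
            linarith)
      show bfun (Icc a b) (fun y => inducedMean b y ℓ) x u ≤ m - 1 / ((l:ℝ) + 1)
      linarith
    rw [hU, hmonoU.measure_iUnion, lt_iSup_iff] at hbig
    obtain ⟨k, hk⟩ := hbig
    have hle : ucb (Icc a b) (fun y => inducedMean b y ℓ) α x ≤ m - 1 / ((k:ℝ) + 1) :=
      csInf_le ⟨a, hbdd⟩ hk.le
    have : 0 < 1 / ((k:ℝ) + 1) := by positivity
    linarith
end
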